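/- (Averaged Fourier energy over hyperplanes.) Let d ≥ 2 and α > 0. There exists a constant c_d > 0, depending only on d, such that for every finite Borel measure ν with compact support on ℝ^d, ∫_{S^{d−1}} ∫_{v^⊥} |ξ|^{α−(d−1)} |ν̂(ξ)|² dH^{d−1}(ξ) dH^{d−1}(v) = c_d · I_α(ν), where for each unit vector v ∈ S^{d−1}, v^⊥ denotes the hyperplane in ℝ^d orthogonal to v and H^{d−1} denotes (d−1)-dimensional Hausdorff measure. -/

import Mathlib

open MeasureTheory Real Metric Set
open scoped RealInnerProductSpace ENNReal NNReal

noncomputable section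

/-- The Fourier transform of a measure. -/
def ftM {d : ℕ} (ν : Measure (EuclideanSpace ℝ (Fin d))) (ξ : EuclideanSpace ℝ (Fin d)) : ℂ :=
  ∫ x, Complex.exp (-(Complex.I * Complex.ofReal ⟪x, ξ⟫)) ∂ν

/-- The Fourier energy `I_α(ν) = ∫ |ν̂(ξ)|² |ξ|^{α-d} dξ` (as an extended real). -/
def fourierEnergyL {d : ℕ} (α : ℝ) (ν : Measure (EuclideanSpace ℝ (Fin d))) : ℝ≥0∞ :=
  ∫⁻ ξ, (‖ftM ν ξ‖₊ : ℝ≥0∞) ^ 2 * ENNReal.ofReal (‖ξ‖ ^ (α - (d : ℝ)))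

/-- `ν` is a finite Borel measure compactly supported inside `A`. -/
def MeasureIn {d : ℕ} (ν : Measure (EuclideanSpace ℝ (Fin d)))
    (A : Set (EuclideanSpace ℝ (Fin d))) : Prop :=
  IsFiniteMeasure ν ∧ ∃ K, IsCompact K ∧ K ⊆ A ∧ ν Kᶜ = 0

/-! Integrating over the pairs `(v, ξ)` with `v ∈ S^(d-1)` and `ξ ∈ v^⊥` defines a measure on `ℝ^d`
invariant under the orthogonal group. Averaging over that group, such a measure is determined by its
integrals of radial functions `F ‖ξ‖`. On those, all hyperplanes `v^⊥` contribute the same integral,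
which in polar coordinates is a multiple of `∫ r^(d-2) F(r) dr`, just as the integral of `F ‖ξ‖`
against `‖ξ‖⁻¹ dξ` is. Hence the two measures are proportional, and the factor `‖ξ‖⁻¹` accounts for
the shift of the exponent from `α - (d - 1)` to `α - d`. -/

open Module (finrank)
open scoped Topology

section OrthogonallyInvariant

variable {E : Type*} [NormedAddCommGroup E] [InnerProductSpace ℝ E] [MeasurableSpace E]
  [BorelSpace E]

/-- A measure is orthogonally invariant if every linear isometry of the space, reflections
included, preserves it. -/
def IsOrthogonallyInvariant (μ : Measure E) : Prop :=
  ∀ h : E ≃ₗᵢ[ℝ] E, MeasurePreserving h μ μ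

lemma isOrthogonallyInvariant_hausdorffMeasure (s : ℝ) :
    IsOrthogonallyInvariant (μH[s] : Measure E) :=
  fun h => h.toIsometryEquiv.measurePreserving_hausdorffMeasure s

lemma isOrthogonallyInvariant_volume [FiniteDimensional ℝ E] :
    IsOrthogonallyInvariant (volume : Measure E) :=
  fun h => h.measurePreserving

namespace IsOrthogonallyInvariant

variable {μ ν : Measure E}

lemma of_lintegral_comp
    (hμ : ∀ h : E ≃ₗᵢ[ℝ] E, ∀ f : E → ℝ≥0∞, Measurable f → ∫⁻ x, f (h x) ∂μ = ∫⁻ x, f x ∂μ) :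
    IsOrthogonallyInvariant μ := by
  refine fun h => ⟨h.continuous.measurable, Measure.ext_of_lintegral _ fun f hf => ?_⟩
  rw [lintegral_map hf h.continuous.measurable, hμ h f hf]

lemma lintegral_comp (hμ : IsOrthogonallyInvariant μ) (h : E ≃ₗᵢ[ℝ] E) (f : E → ℝ≥0∞) :
    ∫⁻ x, f (h x) ∂μ = ∫⁻ x, f x ∂μ :=
  (hμ h).lintegral_comp_emb h.toHomeomorph.measurableEmbedding f

lemma setLIntegral_comp (hμ : IsOrthogonallyInvariant μ) (h : E ≃ₗᵢ[ℝ] E) (f : E → ℝ≥0∞)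
    (s : Set E) : ∫⁻ x in s, f (h x) ∂μ = ∫⁻ x in h '' s, f x ∂μ :=
  (hμ h).setLIntegral_comp_emb h.toHomeomorph.measurableEmbedding f s

lemma restrict_sphere (hμ : IsOrthogonallyInvariant μ) (r : ℝ) :
    IsOrthogonallyInvariant (μ.restrict (sphere 0 r)) := by
  refine of_lintegral_comp fun h f _ => ?_
  rw [hμ.setLIntegral_comp, h.image_sphere, map_zero]

lemma withDensity_norm (hμ : IsOrthogonallyInvariant μ) {F : ℝ → ℝ≥0∞} (hF : Measurable F) :
    IsOrthogonallyInvariant (μ.withDensity fun x => F ‖x‖) := by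
  refine of_lintegral_comp fun h f hf => ?_
  have hFn : Measurable fun x : E => F ‖x‖ := hF.comp measurable_norm
  have hfh : Measurable fun x => f (h x) := hf.comp h.continuous.measurable
  rw [lintegral_withDensity_eq_lintegral_mul _ hFn hfh,
    lintegral_withDensity_eq_lintegral_mul _ hFn hf,
    ← hμ.lintegral_comp h ((fun x => F ‖x‖) * f)]
  simp only [Pi.mul_apply, h.norm_map]

end IsOrthogonallyInvariant

end OrthogonallyInvariant

section OrthogonalAverage

variable {E : Type*} [NormedAddCommGroup E] [InnerProductSpace ℝ E] [FiniteDimensional ℝ E]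

instance compactSpace_unitary : CompactSpace (unitary (E →L[ℝ] E)) := by
  have : ProperSpace (E →L[ℝ] E) := FiniteDimensional.proper ℝ _
  refine isCompact_iff_compactSpace.mp <| isCompact_of_isClosed_isBounded isClosed_unitary <|
    isBounded_closedBall.subset fun u hu => mem_closedBall_zero_iff.2 (?_ : ‖u‖ ≤ 1)
  refine u.opNorm_le_bound zero_le_one fun x => ?_
  rw [one_mul]
  exact (Unitary.norm_map ⟨u, hu⟩ x).le

/-- The average of `f` over the orthogonal group, for its Haar probability measure. The inverse
turns the left invariance of Haar measure into the invariance of the average under `x ↦ h x`. -/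
def orthogonalAverage (f : E → ℝ≥0∞) (x : E) : ℝ≥0∞ :=
  ∫⁻ g : unitary (E →L[ℝ] E), f (Unitary.linearIsometryEquiv g⁻¹ x) ∂Measure.haarMeasure ⊤

lemma orthogonalAverage_map (f : E → ℝ≥0∞) (h : E ≃ₗᵢ[ℝ] E) (x : E) :
    orthogonalAverage f (h x) = orthogonalAverage f x := by
  obtain ⟨k, rfl⟩ := Unitary.linearIsometryEquiv.surjective h
  unfold orthogonalAverage
  rw [← lintegral_mul_left_eq_self (fun g => f (Unitary.linearIsometryEquiv g⁻¹ x)) k⁻¹]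
  simp only [mul_inv_rev, inv_inv, map_mul, LinearIsometryEquiv.coe_mul, Function.comp_apply]

lemma orthogonalAverage_eq_of_norm_eq (f : E → ℝ≥0∞) {x y : E} (hxy : ‖x‖ = ‖y‖) :
    orthogonalAverage f x = orthogonalAverage f y := by
  rw [← Submodule.reflection_sub hxy, orthogonalAverage_map]

variable [MeasurableSpace E] [BorelSpace E]

lemma measurable_linearIsometryEquiv_inv_apply :
    Measurable fun p : unitary (E →L[ℝ] E) × E => Unitary.linearIsometryEquiv p.1⁻¹ p.2 :=
  (Continuous.clm_apply (continuous_subtype_val.comp (continuous_inv.comp continuous_fst))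
    continuous_snd).measurable

lemma measurable_orthogonalAverage {f : E → ℝ≥0∞} (hf : Measurable f) :
    Measurable (orthogonalAverage f) :=
  Measurable.lintegral_prod_left' (hf.comp measurable_linearIsometryEquiv_inv_apply)

lemma IsOrthogonallyInvariant.lintegral_orthogonalAverage {μ : Measure E} [SFinite μ]
    (hμ : IsOrthogonallyInvariant μ) {f : E → ℝ≥0∞} (hf : Measurable f) :
    ∫⁻ x, orthogonalAverage f x ∂μ = ∫⁻ x, f x ∂μ := by
  have : IsProbabilityMeasure
      (Measure.haarMeasure ⊤ : Measure (unitary (E →L[ℝ] E))) := ⟨Measure.haarMeasure_self⟩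
  calc ∫⁻ x, orthogonalAverage f x ∂μ
      = ∫⁻ g : unitary (E →L[ℝ] E), ∫⁻ x, f (Unitary.linearIsometryEquiv g⁻¹ x) ∂μ
          ∂Measure.haarMeasure ⊤ :=
        lintegral_lintegral_swap
          (hf.comp (measurable_linearIsometryEquiv_inv_apply.comp measurable_swap)).aemeasurable
    _ = ∫⁻ x, f x ∂μ := by
        simp only [hμ.lintegral_comp, lintegral_const, measure_univ, mul_one]

theorem IsOrthogonallyInvariant.ext_of_lintegral_norm [Nontrivial E] {μ ν : Measure E} [SFinite μ]
    [SFinite ν] (hμ : IsOrthogonallyInvariant μ) (hν : IsOrthogonallyInvariant ν)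
    (h : ∀ F : ℝ → ℝ≥0∞, Measurable F → ∫⁻ x, F ‖x‖ ∂μ = ∫⁻ x, F ‖x‖ ∂ν) : μ = ν := by
  obtain ⟨e, he⟩ := exists_norm_eq E zero_le_one
  refine Measure.ext_of_lintegral _ fun f hf => ?_
  have average_eq (x : E) : orthogonalAverage f x = orthogonalAverage f (‖x‖ • e) :=
    orthogonalAverage_eq_of_norm_eq f (by rw [norm_smul, norm_norm, he, mul_one])
  have hF : Measurable fun r : ℝ => orthogonalAverage f (r • e) :=
    (measurable_orthogonalAverage hf).comp (measurable_id.smul_const e)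
  calc ∫⁻ x, f x ∂μ = ∫⁻ x, orthogonalAverage f (‖x‖ • e) ∂μ := by
        rw [← hμ.lintegral_orthogonalAverage hf, lintegral_congr average_eq]
    _ = ∫⁻ x, orthogonalAverage f (‖x‖ • e) ∂ν := h _ hF
    _ = ∫⁻ x, f x ∂ν := by
        rw [← hν.lintegral_orthogonalAverage hf, lintegral_congr average_eq]

end OrthogonalAverage

section Radial

variable {E : Type*} [NormedAddCommGroup E] [NormedSpace ℝ E] [FiniteDimensional ℝ E]
  [MeasurableSpace E] [BorelSpace E] (μ : Measure E) [μ.IsAddHaarMeasure]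

lemma lintegral_fun_norm_addHaar [Nontrivial E] {F : ℝ → ℝ≥0∞} (hF : Measurable F) :
    ∫⁻ x, F ‖x‖ ∂μ = μ.toSphere univ *
      ∫⁻ r in Ioi (0 : ℝ), ENNReal.ofReal (r ^ (finrank ℝ E - 1)) * F r := by
  have hF' : Measurable fun r : Ioi (0 : ℝ) => F r := hF.comp measurable_subtype_coe
  calc ∫⁻ x, F ‖x‖ ∂μ
      = ∫⁻ x : ({0}ᶜ : Set E), F (homeomorphUnitSphereProd E x).2 ∂(μ.comap (↑)) := by
        simp only [homeomorphUnitSphereProd_apply_snd_coe]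
        rw [lintegral_subtype_comap (measurableSet_singleton _).compl fun x : E => F ‖x‖,
          restrict_compl_singleton]
    _ = ∫⁻ p, F p.2 ∂(μ.toSphere.prod (Measure.volumeIoiPow (finrank ℝ E - 1))) :=
        μ.measurePreserving_homeomorphUnitSphereProd.lintegral_comp (hF'.comp measurable_snd)
    _ = μ.toSphere univ * ∫⁻ r, F r ∂(Measure.volumeIoiPow (finrank ℝ E - 1)) := by
        rw [lintegral_prod (fun p : sphere (0 : E) 1 × Ioi (0 : ℝ) => F p.2)
          (hF'.comp measurable_snd).aemeasurable]
        simp only [lintegral_const, mul_comm]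
    _ = _ := by
        rw [Measure.volumeIoiPow, lintegral_withDensity_eq_lintegral_mul _ (by fun_prop) hF',
          ← lintegral_subtype_comap measurableSet_Ioi]
        rfl

lemma exists_lintegral_norm_eq_of_finrank_eq_succ {W : Type*} [NormedAddCommGroup W]
    [NormedSpace ℝ W] [FiniteDimensional ℝ W] [MeasurableSpace W] [BorelSpace W] [Nontrivial W]
    (κ : Measure W) [κ.IsAddHaarMeasure] (hEW : finrank ℝ E = finrank ℝ W + 1) :
    ∃ c : ℝ≥0, c ≠ 0 ∧ ∀ F : ℝ → ℝ≥0∞, Measurable F →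
      ∫⁻ y, F ‖y‖ ∂κ = c * ∫⁻ x, ENNReal.ofReal ‖x‖⁻¹ * F ‖x‖ ∂μ := by
  have hW : finrank ℝ W ≠ 0 := Module.finrank_pos.ne'
  have : Nontrivial E := Module.nontrivial_of_finrank_pos (R := ℝ) (by omega)
  have hκ : κ.toSphere univ ≠ 0 := Measure.measure_univ_ne_zero.2 κ.toSphere_ne_zero
  have hμ : μ.toSphere univ ≠ 0 := Measure.measure_univ_ne_zero.2 μ.toSphere_ne_zero
  lift κ.toSphere univ to ℝ≥0 using measure_ne_top _ _ with a ha
  lift μ.toSphere univ to ℝ≥0 using measure_ne_top _ _ with b hb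
  norm_cast at hκ hμ
  refine ⟨a / b, div_ne_zero hκ hμ, fun F hF => ?_⟩
  rw [lintegral_fun_norm_addHaar κ hF,
    lintegral_fun_norm_addHaar μ (F := fun r => ENNReal.ofReal r⁻¹ * F r) (by fun_prop),
    ← ha, ← hb, ← mul_assoc, ← ENNReal.coe_mul, div_mul_cancel₀ _ hμ]
  congr 1
  refine setLIntegral_congr_fun measurableSet_Ioi fun r (hr : 0 < r) => ?_
  rw [← mul_assoc, ← ENNReal.ofReal_mul (by positivity), hEW, Nat.add_sub_cancel,
    pow_sub₀ r hr.ne' (Nat.one_le_iff_ne_zero.2 hW), pow_one]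

end Radial

section Sphere

lemma exists_mem_nhds_hausdorffMeasure_image_lt_top {V W : Type*} [NormedAddCommGroup V]
    [NormedSpace ℝ V] [FiniteDimensional ℝ V] [NormedAddCommGroup W] [NormedSpace ℝ W]
    [MeasurableSpace W] [BorelSpace W] {f : V → W} {x : V} (hf : ContDiffAt ℝ 1 f x) :
    ∃ t ∈ 𝓝 x, μH[finrank ℝ V] (f '' t) < ∞ := by
  borelize V
  obtain ⟨K, t, ht, hK⟩ := hf.exists_lipschitzOnWith
  refine ⟨t ∩ closedBall x 1, Filter.inter_mem ht (closedBall_mem_nhds x one_pos), ?_⟩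
  have hball : (μH[finrank ℝ V] : Measure V) (t ∩ closedBall x 1) < ∞ :=
    (measure_mono inter_subset_right).trans_lt measure_closedBall_lt_top
  refine ((hK.mono inter_subset_left).hausdorffMeasure_image_le (Nat.cast_nonneg _)).trans_lt ?_
  exact ENNReal.mul_lt_top
    (ENNReal.rpow_lt_top_of_nonneg (Nat.cast_nonneg _) ENNReal.coe_ne_top) hball

variable {E : Type*} [NormedAddCommGroup E] [InnerProductSpace ℝ E]

lemma closedBall_subset_orthogonalProjectionOnto_image_sphere {e : E} (he : ‖e‖ = 1) :
    closedBall 0 1 ⊆ (ℝ ∙ e)ᗮ.orthogonalProjectionOnto '' sphere 0 1 := by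
  intro y hy
  have hy' : 0 ≤ 1 - ‖y‖ ^ 2 :=
    sub_nonneg.2 (pow_le_one₀ (norm_nonneg y) (mem_closedBall_zero_iff.1 hy))
  have hye : ⟪(y : E), √(1 - ‖y‖ ^ 2) • e⟫ = 0 := by
    rw [inner_smul_right, Submodule.mem_orthogonal_singleton_iff_inner_left.1 y.2, mul_zero]
  refine ⟨y + √(1 - ‖y‖ ^ 2) • e, ?_, ?_⟩
  · rw [mem_sphere_zero_iff_norm, ← sq_eq_sq₀ (norm_nonneg _) zero_le_one, norm_add_sq_real, hye,
      norm_smul, he, Real.norm_of_nonneg (sqrt_nonneg _), mul_one, Real.sq_sqrt hy',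
      Submodule.coe_norm]
    ring
  · rw [map_add, map_smul, Submodule.orthogonalProjectionOnto_mem_subspace_eq_self,
      Submodule.orthogonalProjectionOnto_orthogonal_apply_eq_zero
        (Submodule.mem_span_singleton_self e), smul_zero, add_zero]

variable [MeasurableSpace E] [BorelSpace E] {n : ℕ} [hn : Fact (finrank ℝ E = n + 1)]

lemma isAddHaarMeasure_hausdorffMeasure_orthogonal_singleton {e : E} (he : e ≠ 0) :
    (μH[n] : Measure (ℝ ∙ e)ᗮ).IsAddHaarMeasure := by
  have : FiniteDimensional ℝ E := .of_fact_finrank_eq_succ n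
  rw [← Submodule.finrank_orthogonal_span_singleton (𝕜 := ℝ) (n := n) he]
  infer_instance

-- Near each of its points the compact sphere is the image of a hyperplane under the smooth inverse
-- of a stereographic projection.
lemma hausdorffMeasure_sphere_lt_top : (μH[n] : Measure E) (sphere 0 1) < ∞ := by
  have : FiniteDimensional ℝ E := .of_fact_finrank_eq_succ n
  refine (isCompact_sphere 0 1).measure_lt_top_of_nhdsWithin fun u hu => ?_
  lift u to sphere (0 : E) 1 using hu
  let φ := stereographic (norm_eq_of_mem_sphere (-u))
  have hu : u ∈ φ.source := ne_neg_of_mem_unit_sphere ℝ u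
  have hφ : ContDiffAt ℝ 1 ((↑) ∘ φ.symm : _ → E) (φ u) :=
    (contDiff_stereoInvFunAux.comp
      (ℝ ∙ ((-u : sphere (0 : E) 1) : E))ᗮ.subtypeL.contDiff).contDiffAt
  obtain ⟨t, ht, htop⟩ := exists_mem_nhds_hausdorffMeasure_image_lt_top hφ
  rw [Submodule.finrank_orthogonal_span_singleton (𝕜 := ℝ) (n := n)
    (ne_zero_of_mem_unit_sphere (-u)), image_comp] at htop
  refine ⟨_, ?_, htop⟩
  rw [← map_nhds_subtype_val u]
  refine Filter.image_mem_map ?_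
  have := φ.symm.image_mem_nhds (φ.map_source hu) ht
  rwa [φ.left_inv hu] at this

lemma hausdorffMeasure_sphere_pos : 0 < (μH[n] : Measure E) (sphere 0 1) := by
  have : FiniteDimensional ℝ E := .of_fact_finrank_eq_succ n
  have : Nontrivial E := Module.nontrivial_of_finrank_pos (R := ℝ) (hn.out ▸ n.succ_pos)
  obtain ⟨e, he⟩ := exists_norm_eq E zero_le_one
  have := isAddHaarMeasure_hausdorffMeasure_orthogonal_singleton (n := n)
    (norm_ne_zero_iff.1 (he ▸ one_ne_zero))
  calc 0 < (μH[n] : Measure (ℝ ∙ e)ᗮ) (closedBall 0 1) := measure_closedBall_pos _ _ one_pos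
    _ ≤ μH[n] ((ℝ ∙ e)ᗮ.orthogonalProjectionOnto '' sphere 0 1) :=
        measure_mono (closedBall_subset_orthogonalProjectionOnto_image_sphere he)
    _ ≤ μH[n] (sphere (0 : E) 1) :=
        hausdorffMeasure_orthogonalProjectionOnto_le _ _ _ n.cast_nonneg

end Sphere

section Hyperplane

variable {E : Type*} [NormedAddCommGroup E] [InnerProductSpace ℝ E]

lemma image_orthogonal_singleton (h : E ≃ₗᵢ[ℝ] E) (v : E) :
    h '' (ℝ ∙ v)ᗮ = (ℝ ∙ h v)ᗮ := by
  have := congrArg (SetLike.coe (B := E)) (Submodule.map_orthogonal_equiv (ℝ ∙ v) h)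
  rw [Submodule.map_span, image_singleton] at this
  exact this

variable [MeasurableSpace E] [BorelSpace E]

lemma hausdorffMeasure_restrict_submodule (U : Submodule ℝ E) (n : ℕ) :
    (μH[n] : Measure E).restrict U = (μH[n] : Measure U).map (↑) := by
  rw [isometry_subtype_coe.map_hausdorffMeasure (.inl n.cast_nonneg), Subtype.range_coe]

lemma setLIntegral_orthogonal_singleton_comp (s : ℝ) (h : E ≃ₗᵢ[ℝ] E) (v : E) (f : E → ℝ≥0∞) :
    ∫⁻ ξ in (ℝ ∙ v)ᗮ, f (h ξ) ∂μH[s] = ∫⁻ ξ in (ℝ ∙ h v)ᗮ, f ξ ∂μH[s] := by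
  rw [(isOrthogonallyInvariant_hausdorffMeasure s).setLIntegral_comp,
    image_orthogonal_singleton]

lemma setLIntegral_orthogonal_singleton (n : ℕ) (v : E) {f : E → ℝ≥0∞} (hf : Measurable f) :
    ∫⁻ ξ in (ℝ ∙ v)ᗮ, f ξ ∂μH[n] = ∫⁻ ξ : (ℝ ∙ v)ᗮ, f ξ ∂μH[n] := by
  rw [hausdorffMeasure_restrict_submodule, lintegral_map hf measurable_subtype_coe]

lemma sFinite_hausdorffMeasure_restrict_orthogonal_singleton {n : ℕ}
    [Fact (finrank ℝ E = n + 1)] {e : E} (he : e ≠ 0) :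
    SFinite ((μH[n] : Measure E).restrict (ℝ ∙ e)ᗮ) := by
  have : FiniteDimensional ℝ E := .of_fact_finrank_eq_succ n
  have := isAddHaarMeasure_hausdorffMeasure_orthogonal_singleton (n := n) he
  rw [hausdorffMeasure_restrict_submodule]
  infer_instance

lemma measurable_reflection_sub_apply [SecondCountableTopology E] (e : E) :
    Measurable fun p : E × E => (ℝ ∙ (e - p.1))ᗮ.reflection p.2 := by
  simp only [Submodule.reflection_orthogonal_apply, Submodule.reflection_singleton_apply,
    RCLike.ofReal_real_eq_id, id]
  fun_prop

/-- The measure `∫_{S^n} H^n|_{v^⊥} dH^n(v)`, built as an image of the product measure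
`H^n|_{S^n} × H^n|_{e^⊥}` for a fixed unit vector `e`: the reflection exchanging `e` and `v`
carries `e^⊥` onto `v^⊥` and depends measurably on `v`. -/
def sweptHyperplaneMeasure (n : ℕ) (e : E) : Measure E :=
  (((μH[n] : Measure E).restrict (sphere 0 1)).prod ((μH[n] : Measure E).restrict (ℝ ∙ e)ᗮ)).map
    fun p => (ℝ ∙ (e - p.1))ᗮ.reflection p.2

variable {n : ℕ} [hn : Fact (finrank ℝ E = n + 1)] {e : E}

lemma lintegral_sweptHyperplaneMeasure (he : ‖e‖ = 1) {f : E → ℝ≥0∞} (hf : Measurable f) :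
    ∫⁻ ξ, f ξ ∂(sweptHyperplaneMeasure n e)
      = ∫⁻ v in sphere (0 : E) 1, ∫⁻ ξ in (ℝ ∙ v)ᗮ, f ξ ∂μH[n] ∂μH[n] := by
  have : FiniteDimensional ℝ E := .of_fact_finrank_eq_succ n
  have := sFinite_hausdorffMeasure_restrict_orthogonal_singleton (n := n)
    (norm_ne_zero_iff.1 (he ▸ one_ne_zero))
  have hrefl := measurable_reflection_sub_apply e
  have hfrefl : Measurable fun p : E × E => f ((ℝ ∙ (e - p.1))ᗮ.reflection p.2) := hf.comp hrefl
  rw [sweptHyperplaneMeasure, lintegral_map hf hrefl, lintegral_prod _ hfrefl.aemeasurable]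
  refine setLIntegral_congr_fun isClosed_sphere.measurableSet fun v hv => ?_
  have hev : ‖e‖ = ‖v‖ := he.trans (mem_sphere_zero_iff_norm.1 hv).symm
  exact (setLIntegral_orthogonal_singleton_comp _ _ e f).trans
    (by rw [Submodule.reflection_sub hev])

lemma isOrthogonallyInvariant_sweptHyperplaneMeasure (he : ‖e‖ = 1) :
    IsOrthogonallyInvariant (sweptHyperplaneMeasure n e) := by
  refine .of_lintegral_comp fun h f hf => ?_
  have hfh : Measurable fun ξ => f (h ξ) := hf.comp h.continuous.measurable
  rw [lintegral_sweptHyperplaneMeasure he hf, lintegral_sweptHyperplaneMeasure he hfh]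
  simp only [setLIntegral_orthogonal_singleton_comp]
  exact ((isOrthogonallyInvariant_hausdorffMeasure n).restrict_sphere 1).lintegral_comp h
    fun v => ∫⁻ ξ in (ℝ ∙ v)ᗮ, f ξ ∂μH[n]

lemma lintegral_norm_sweptHyperplaneMeasure (he : ‖e‖ = 1) {F : ℝ → ℝ≥0∞} (hF : Measurable F) :
    ∫⁻ ξ, F ‖ξ‖ ∂(sweptHyperplaneMeasure n e)
      = μH[n] (sphere (0 : E) 1) * ∫⁻ y : (ℝ ∙ e)ᗮ, F ‖y‖ ∂μH[n] := by
  have : FiniteDimensional ℝ E := .of_fact_finrank_eq_succ n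
  have hFn : Measurable fun ξ : E => F ‖ξ‖ := hF.comp measurable_norm
  have := sFinite_hausdorffMeasure_restrict_orthogonal_singleton (n := n)
    (norm_ne_zero_iff.1 (he ▸ one_ne_zero))
  rw [sweptHyperplaneMeasure, lintegral_map hFn (measurable_reflection_sub_apply e)]
  simp only [LinearIsometryEquiv.norm_map]
  rw [lintegral_prod (fun p : E × E => F ‖p.2‖) (hFn.comp measurable_snd).aemeasurable]
  simp only [lintegral_const, Measure.restrict_apply_univ]
  rw [mul_comm, setLIntegral_orthogonal_singleton n e hFn]
  rfl

lemma sFinite_sweptHyperplaneMeasure (he : e ≠ 0) : SFinite (sweptHyperplaneMeasure n e) := by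
  have := sFinite_hausdorffMeasure_restrict_orthogonal_singleton (n := n) he
  have : IsFiniteMeasure ((μH[n] : Measure E).restrict (sphere 0 1)) :=
    isFiniteMeasure_restrict.2 hausdorffMeasure_sphere_lt_top.ne
  unfold sweptHyperplaneMeasure
  infer_instance

lemma exists_lintegral_norm_sweptHyperplaneMeasure_eq [FiniteDimensional ℝ E] (hn0 : n ≠ 0)
    (he : ‖e‖ = 1) :
    ∃ c : ℝ≥0, c ≠ 0 ∧ ∀ F : ℝ → ℝ≥0∞, Measurable F →
      ∫⁻ ξ, F ‖ξ‖ ∂(sweptHyperplaneMeasure n e) = c * ∫⁻ ξ : E, ENNReal.ofReal ‖ξ‖⁻¹ * F ‖ξ‖ := by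
  have he0 : e ≠ 0 := norm_ne_zero_iff.1 (he ▸ one_ne_zero)
  have := isAddHaarMeasure_hausdorffMeasure_orthogonal_singleton (n := n) he0
  have hW : finrank ℝ (ℝ ∙ e)ᗮ = n := Submodule.finrank_orthogonal_span_singleton he0
  have : Nontrivial (ℝ ∙ e)ᗮ := Module.nontrivial_of_finrank_pos (R := ℝ) (by omega)
  obtain ⟨a, ha, hradial⟩ := exists_lintegral_norm_eq_of_finrank_eq_succ (volume : Measure E)
    (μH[n] : Measure (ℝ ∙ e)ᗮ) (by rw [hW, hn.out])
  have hσ0 : (μH[n] : Measure E) (sphere 0 1) ≠ 0 := hausdorffMeasure_sphere_pos.ne'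
  lift (μH[n] : Measure E) (sphere 0 1) to ℝ≥0 using hausdorffMeasure_sphere_lt_top.ne with σ hσ
  refine ⟨σ * a, mul_ne_zero (mod_cast hσ0) ha, fun F hF => ?_⟩
  rw [lintegral_norm_sweptHyperplaneMeasure he hF, ← hσ, hradial F hF, ENNReal.coe_mul, mul_assoc]

lemma exists_sweptHyperplaneMeasure_eq_withDensity [FiniteDimensional ℝ E] (hn0 : n ≠ 0)
    (he : ‖e‖ = 1) :
    ∃ c : ℝ≥0, c ≠ 0 ∧
      sweptHyperplaneMeasure n e = volume.withDensity fun ξ => c * ENNReal.ofReal ‖ξ‖⁻¹ := by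
  have he0 : e ≠ 0 := norm_ne_zero_iff.1 (he ▸ one_ne_zero)
  have : Nontrivial E := ⟨e, 0, he0⟩
  have := sFinite_sweptHyperplaneMeasure (n := n) he0
  obtain ⟨c, hc, hradial⟩ := exists_lintegral_norm_sweptHyperplaneMeasure_eq hn0 he
  have hdensity : Measurable fun r : ℝ => (c : ℝ≥0∞) * ENNReal.ofReal r⁻¹ := by fun_prop
  have hvolume := (isOrthogonallyInvariant_volume (E := E)).withDensity_norm hdensity
  have hswept := isOrthogonallyInvariant_sweptHyperplaneMeasure (n := n) he
  refine ⟨c, hc, hswept.ext_of_lintegral_norm hvolume fun F hF => ?_⟩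
  have hFn : Measurable fun ξ : E => F ‖ξ‖ := hF.comp measurable_norm
  rw [hradial F hF, lintegral_withDensity_eq_lintegral_mul _ (by fun_prop) hFn,
    ← lintegral_const_mul _ (by fun_prop)]
  simp only [Pi.mul_apply, mul_assoc]

theorem exists_lintegral_sphere_orthogonal_eq [FiniteDimensional ℝ E] (hn0 : n ≠ 0) :
    ∃ c : ℝ≥0, c ≠ 0 ∧ ∀ f : E → ℝ≥0∞, Measurable f →
      ∫⁻ v in sphere (0 : E) 1, ∫⁻ ξ in (ℝ ∙ v)ᗮ, f ξ ∂μH[n] ∂μH[n]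
        = c * ∫⁻ ξ, ENNReal.ofReal ‖ξ‖⁻¹ * f ξ := by
  have : Nontrivial E := Module.nontrivial_of_finrank_pos (R := ℝ) (hn.out ▸ n.succ_pos)
  obtain ⟨e, he⟩ := exists_norm_eq E zero_le_one
  obtain ⟨c, hc, hswept⟩ := exists_sweptHyperplaneMeasure_eq_withDensity hn0 he
  refine ⟨c, hc, fun f hf => ?_⟩
  rw [← lintegral_sweptHyperplaneMeasure he hf, hswept,
    lintegral_withDensity_eq_lintegral_mul _ (by fun_prop) hf,
    ← lintegral_const_mul _ (by fun_prop)]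
  simp only [Pi.mul_apply, mul_assoc]

end Hyperplane

section FourierEnergy

variable {d : ℕ}

lemma measurable_ftM (ν : Measure (EuclideanSpace ℝ (Fin d))) [SFinite ν] :
    Measurable (ftM ν) := by
  have hexp : Continuous fun p : EuclideanSpace ℝ (Fin d) × EuclideanSpace ℝ (Fin d) =>
      Complex.exp (-(Complex.I * Complex.ofReal ⟪p.1, p.2⟫)) := by
    fun_prop
  exact hexp.stronglyMeasurable.integral_prod_left'.measurable

lemma lintegral_inv_norm_mul_ftM_eq_fourierEnergyL (hd : d ≠ 0) (α : ℝ)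
    (ν : Measure (EuclideanSpace ℝ (Fin d))) :
    ∫⁻ ξ, ENNReal.ofReal ‖ξ‖⁻¹ *
        (ENNReal.ofReal (‖ξ‖ ^ (α - ((d : ℝ) - 1))) * (‖ftM ν ξ‖₊ : ℝ≥0∞) ^ 2)
      = fourierEnergyL α ν := by
  have : NeZero d := ⟨hd⟩
  refine lintegral_congr_ae ?_
  filter_upwards [Measure.ae_ne volume 0] with ξ hξ
  have hrpow : ‖ξ‖⁻¹ * ‖ξ‖ ^ (α - ((d : ℝ) - 1)) = ‖ξ‖ ^ (α - (d : ℝ)) := by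
    rw [← rpow_neg_one, ← rpow_add (norm_pos_iff.2 hξ)]
    ring_nf
  rw [← mul_assoc, ← ENNReal.ofReal_mul (by positivity), hrpow, mul_comm]

theorem averaged_fourier_energy_general (d : ℕ) (hd : 2 ≤ d) :
    ∃ c : ℝ, 0 < c ∧ ∀ (α : ℝ) (ν : Measure (EuclideanSpace ℝ (Fin d))) [IsFiniteMeasure ν],
      ∫⁻ v in sphere (0 : EuclideanSpace ℝ (Fin d)) 1,
        (∫⁻ ξ in {ξ : EuclideanSpace ℝ (Fin d) | ⟪v, ξ⟫ = 0},
            ENNReal.ofReal (‖ξ‖ ^ (α - ((d : ℝ) - 1))) * (‖ftM ν ξ‖₊ : ℝ≥0∞) ^ 2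
              ∂(μH[(d : ℝ) - 1]))
          ∂(μH[(d : ℝ) - 1])
        = ENNReal.ofReal c * fourierEnergyL α ν := by
  obtain ⟨n, rfl⟩ : ∃ n, d = n + 1 := Nat.exists_eq_succ_of_ne_zero (by omega)
  have : Fact (finrank ℝ (EuclideanSpace ℝ (Fin (n + 1))) = n + 1) := ⟨finrank_euclideanSpace_fin⟩
  obtain ⟨c, hc, hslice⟩ :=
    exists_lintegral_sphere_orthogonal_eq (E := EuclideanSpace ℝ (Fin (n + 1))) (n := n) (by omega)
  refine ⟨c, NNReal.coe_pos.2 (pos_iff_ne_zero.2 hc), fun α ν _ => ?_⟩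
  have hperp (v : EuclideanSpace ℝ (Fin (n + 1))) : {ξ | ⟪v, ξ⟫ = 0} = ((ℝ ∙ v)ᗮ : Set _) :=
    Set.ext fun ξ => Submodule.mem_orthogonal_singleton_iff_inner_right.symm
  have hdim : ((n + 1 : ℕ) : ℝ) - 1 = n := by rw [Nat.cast_succ, add_sub_cancel_right]
  have hft := measurable_ftM ν
  rw [← lintegral_inv_norm_mul_ftM_eq_fourierEnergyL n.succ_ne_zero, ENNReal.ofReal_coe_nnreal]
  simp only [hperp, hdim]
  exact hslice _ (by fun_prop)

end FourierEnergy

/-- averaged Fourier energy over hyperplanes. There is a constant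
`c_d > 0`, depending only on `d`, such that for every `α > 0` and every compactly
supported finite Borel measure `ν` on `ℝ^d`,
`∫_{S^{d-1}} ∫_{v^⊥} |ξ|^{α-(d-1)} |ν̂(ξ)|² dH^{d-1}(ξ) dH^{d-1}(v) = c_d I_α(ν)`. -/
theorem averaged_fourier_energy (d : ℕ) (hd : 2 ≤ d) :
    ∃ c : ℝ, 0 < c ∧ ∀ α : ℝ, 0 < α →
      ∀ ν : Measure (EuclideanSpace ℝ (Fin d)), MeasureIn ν univ →
        ∫⁻ v in sphere (0 : EuclideanSpace ℝ (Fin d)) 1,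
          (∫⁻ ξ in {ξ : EuclideanSpace ℝ (Fin d) | ⟪v, ξ⟫ = 0},
              ENNReal.ofReal (‖ξ‖ ^ (α - ((d : ℝ) - 1))) * (‖ftM ν ξ‖₊ : ℝ≥0∞) ^ 2
                ∂(μH[(d : ℝ) - 1]))
            ∂(μH[(d : ℝ) - 1])
          = ENNReal.ofReal c * fourierEnergyL α ν := by
  obtain ⟨c, hc, h⟩ := averaged_fourier_energy_general d hd
  exact ⟨c, hc, fun α _ ν hν => have := hν.1; h α ν⟩
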